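/- Let g : Y → Set (PMF Z) have convex values consisting of finitely supported PMFs, and let (f_n : X → Set (PMF Y))_{n∈ℕ} be a pointwise increasing sequence of maps whose values are convex sets of finitely supported PMFs. Then for every x ∈ X, (g ⊙ (⋁_n f_n))(x) = cl( ⋃_{n∈ℕ} (g ⊙ f_n)(x) ); that is, Kleisli composition for the composite monad ~PD preserves joins of ω-chains in its second (inner) argument. -/

import Mathlib

/-!
For an increasing chain of convex sets of finitely supported PMFs, the convex closure of the union
is the union itself: a finitely supported mixture only involves finitely many members, and these
already lie in a single set of the chain (`clD_iUnion`). This applies to `f n x`, and, once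
`kcompD g (f n) x` is known to be convex, to the composites too, so both sides of the theorem equal
`⋃ n, kcompD g (f n) x`.

The substance is the convexity of the composite (`clD_kcompD_subset`). Given a mixture `Ψ` of
composites `χ = φ_χ >>= (Φ_χ y).bind id`, one forms the joint law `J` of the pairs `(y, ξ)`, where
`χ` is drawn from `Ψ`, then `y` from `φ_χ`, then `ξ` from `Φ_χ y`. The marginal of `J` on `Y` is a
mixture of the `φ_χ`, hence belongs to the convex set `f x`; the conditional law of `ξ` given `y`
(`exists_disintegration`) has finite support inside `g y`, and recombining the two gives the
original mixture.
-/

/-- Convex closure for sets of finitely supported PMFs: all `Ψ.bind id` with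
`Ψ` a finitely supported PMF on `PMF Z` supported inside the set.
A set `A` is convex when `clD A = A`. -/
def clD {Z : Type*} (A : Set (PMF Z)) : Set (PMF Z) :=
  { χ | ∃ Ψ : PMF (PMF Z), Ψ.support.Finite ∧ Ψ.support ⊆ A ∧ χ = Ψ.bind id }

/-- Kleisli composition for the composite monad `~PD` of full powerset over the
finite distribution monad. -/
def kcompD {X Y Z : Type*} (g : Y → Set (PMF Z)) (f : X → Set (PMF Y)) :
    X → Set (PMF Z) := fun x =>
  { χ | ∃ φ ∈ f x, ∃ Φ : Y → PMF (PMF Z),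
      (∀ y ∈ φ.support, (Φ y).support.Finite ∧ (Φ y).support ⊆ g y) ∧
      χ = φ.bind fun y => (Φ y).bind id }

theorem bind_congr_support {A B : Type*} (p : PMF A) (F G : A → PMF B)
    (h : ∀ a ∈ p.support, F a = G a) : p.bind F = p.bind G := by
  ext b
  simp only [PMF.bind_apply]
  refine tsum_congr fun a => ?_
  by_cases ha : p a = 0
  · simp [ha]
  · rw [h a ((PMF.mem_support_iff p a).2 ha)]

theorem finite_support_bind {A B : Type*} (p : PMF A) (F : A → PMF B)
    (hp : p.support.Finite) (hF : ∀ a ∈ p.support, (F a).support.Finite) :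
    (p.bind F).support.Finite := by
  rw [PMF.support_bind]
  exact hp.biUnion hF

theorem finite_support_map {A B : Type*} (p : PMF A) (F : A → B)
    (hp : p.support.Finite) : (p.map F).support.Finite := by
  rw [PMF.support_map]
  exact hp.image F

theorem subset_clD {Z : Type*} (A : Set (PMF Z)) : A ⊆ clD A := fun χ hχ =>
  ⟨PMF.pure χ, by simp, by simpa using hχ, by simp⟩

/-- A finitely supported mixture of members of an increasing chain only involves members of one
set of the chain. -/
theorem clD_iUnion {Z : Type*} (A : ℕ → Set (PMF Z)) (hA : Monotone A)
    (hconv : ∀ n, clD (A n) ⊆ A n) : clD (⋃ n, A n) = ⋃ n, A n := by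
  refine Set.Subset.antisymm ?_ (subset_clD _)
  rintro χ ⟨Ψ, hfin, hsub, hχ⟩
  obtain ⟨n, hn⟩ := hA.directed_le.exists_mem_subset_of_finset_subset_biUnion
    (s := hfin.toFinset) (by simpa using hsub)
  exact Set.mem_iUnion.2 ⟨n, hconv n ⟨Ψ, hfin, by simpa using hn, hχ⟩⟩

/-- Every PMF on a product is recovered from its first marginal and the conditional laws of the
second coordinate given the first. -/
theorem exists_disintegration {Y W : Type*} (J : PMF (Y × W)) :
    ∃ K : Y → PMF W, (∀ y ∈ (J.map Prod.fst).support, ∀ w ∈ (K y).support, (y, w) ∈ J.support) ∧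
      J = (J.map Prod.fst).bind fun y => (K y).map (Prod.mk y) := by
  classical
  obtain ⟨⟨-, w₀⟩, -⟩ := J.support_nonempty
  have hmarg : ∀ y, (J.map Prod.fst) y = ∑' w, J (y, w) := by
    intro y
    rw [PMF.map_apply, ENNReal.tsum_prod', tsum_eq_single y]
    · simp
    · intro y' hy'
      simp [hy'.symm]
  have hne_top : ∀ y, ∑' w, J (y, w) ≠ ⊤ := fun y => by
    rw [← hmarg]
    exact PMF.apply_ne_top _ _
  have hcond : ∀ y, ∃ k : PMF W, ∀ w, (∑' w, J (y, w)) * k w = J (y, w) := fun y => by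
    by_cases h : ∑' w, J (y, w) = 0
    · exact ⟨PMF.pure w₀, fun w => by rw [h, zero_mul, ENNReal.tsum_eq_zero.1 h w]⟩
    · refine ⟨PMF.normalize (fun w => J (y, w)) h (hne_top y), fun w => ?_⟩
      rw [PMF.normalize_apply, mul_left_comm, ENNReal.mul_inv_cancel h (hne_top y), mul_one]
  choose K hK using hcond
  refine ⟨K, ?_, ?_⟩
  · intro y hy w hw
    rw [PMF.mem_support_iff] at hy hw ⊢
    rw [← hK, ← hmarg]
    exact mul_ne_zero hy hw
  · ext ⟨y, w⟩
    rw [PMF.bind_apply, tsum_eq_single y]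
    · have hw : (PMF.map (Prod.mk y) (K y)) (y, w) = K y w := by
        rw [PMF.map_apply, tsum_eq_single w]
        · simp
        · intro w' hw'
          simp [hw'.symm]
      rw [hw, hmarg, hK]
    · intro y' hy'
      rw [mul_eq_zero]
      right
      rw [PMF.map_apply, ENNReal.tsum_eq_zero]
      intro w'
      simp [hy'.symm]

theorem kcompD_mono {X Y Z : Type*} (g : Y → Set (PMF Z)) {f f' : X → Set (PMF Y)} {x : X}
    (h : f x ⊆ f' x) : kcompD g f x ⊆ kcompD g f' x := by
  rintro χ ⟨φ, hφ, H⟩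
  exact ⟨φ, h hφ, H⟩

/-- The Kleisli composite is convex at `x` as soon as its inner argument takes a convex set of
finitely supported PMFs as its value at `x`; nothing is required of `g`. -/
theorem clD_kcompD_subset {X Y Z : Type*} (g : Y → Set (PMF Z)) (f : X → Set (PMF Y)) (x : X)
    (hfin : ∀ φ ∈ f x, φ.support.Finite) (hconv : clD (f x) ⊆ f x) :
    clD (kcompD g f x) ⊆ kcompD g f x := by
  rintro _ ⟨Ψ, hΨfin, hΨ, rfl⟩
  obtain ⟨χ₀, hχ₀⟩ := Ψ.support_nonempty
  obtain ⟨φ₀, -⟩ := hΨ hχ₀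
  have : Nonempty (PMF Y) := ⟨φ₀⟩
  have : Nonempty (Y → PMF (PMF Z)) := ⟨fun _ => Ψ⟩
  have hΨ' : ∀ χ ∈ Ψ.support, ∃ φ, ∃ Φ : Y → PMF (PMF Z), φ ∈ f x ∧
      (∀ y ∈ φ.support, (Φ y).support.Finite ∧ (Φ y).support ⊆ g y) ∧
      χ = φ.bind fun y => (Φ y).bind id := fun χ hχ => by
    obtain ⟨φ, h1, Φ, h2, h3⟩ := hΨ hχ
    exact ⟨φ, Φ, h1, h2, h3⟩
  choose! φ Φ hφ hΦ hχ using hΨ'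
  -- the joint law of `(y, ξ)`
  let J : PMF (Y × PMF Z) := Ψ.bind fun χ => (φ χ).bind fun y => (Φ χ y).map (Prod.mk y)
  have hJfin : J.support.Finite :=
    finite_support_bind _ _ hΨfin fun χ hχs =>
      finite_support_bind _ _ (hfin _ (hφ χ hχs)) fun y hy =>
        finite_support_map _ _ (hΦ χ hχs y hy).1
  have hJg : ∀ y ξ, (y, ξ) ∈ J.support → ξ ∈ g y := by
    intro y ξ h
    simp only [J, PMF.mem_support_bind_iff, PMF.support_map, Set.mem_image, Prod.mk.injEq] at h
    obtain ⟨χ, hχs, y', hy', ξ', hξ', rfl, rfl⟩ := h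
    exact (hΦ χ hχs y' hy').2 hξ'
  have hJfst : J.map Prod.fst = (Ψ.map φ).bind id := by
    simp only [J, PMF.map_bind, PMF.map_comp, PMF.bind_map]
    congr 1
    funext χ
    simp
  have hJsnd : J.bind Prod.snd = Ψ.bind id := by
    simp only [J, PMF.bind_bind, PMF.bind_map]
    exact bind_congr_support _ _ _ fun χ hχs => (hχ χ hχs).symm
  obtain ⟨K, hK, hJ⟩ := exists_disintegration J
  refine ⟨J.map Prod.fst, ?_, K, ?_, ?_⟩
  · refine hconv ⟨Ψ.map φ, finite_support_map _ _ hΨfin, ?_, hJfst⟩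
    rw [PMF.support_map]
    rintro _ ⟨χ, hχs, rfl⟩
    exact hφ χ hχs
  · intro y hy
    refine ⟨?_, fun ξ hξ => hJg y ξ (hK y hy ξ hξ)⟩
    exact (hJfin.preimage (Prod.mk_right_injective y).injOn).subset fun ξ hξ => hK y hy ξ hξ
  · rw [← hJsnd]
    conv_lhs => rw [hJ]
    rw [PMF.bind_bind]
    simp only [PMF.bind_map, Function.comp_def]
    rfl

theorem stmt6 {X Y Z : Type*} (g : Y → Set (PMF Z)) (f : ℕ → X → Set (PMF Y))
    (hgfin : ∀ y, ∀ χ ∈ g y, χ.support.Finite) (hgconv : ∀ y, clD (g y) = g y)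
    (hffin : ∀ n x, ∀ φ ∈ f n x, φ.support.Finite) (hfconv : ∀ n x, clD (f n x) = f n x)
    (hfmono : ∀ n x, f n x ⊆ f (n + 1) x) (x : X) :
    kcompD g (fun x => clD (⋃ n, f n x)) x = clD (⋃ n, kcompD g (f n) x) := by
  have hmono : Monotone fun n => f n x := monotone_nat_of_le_succ fun n => hfmono n x
  have hleft : clD (⋃ n, f n x) = ⋃ n, f n x := clD_iUnion _ hmono fun n => (hfconv n x).subset
  have hright : clD (⋃ n, kcompD g (f n) x) = ⋃ n, kcompD g (f n) x :=
    clD_iUnion _ (fun _ _ h => kcompD_mono g (hmono h)) fun n =>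
      clD_kcompD_subset g (f n) x (hffin n x) (hfconv n x).subset
  rw [hright]
  ext χ
  simp only [kcompD, hleft, Set.mem_ofPred_eq, Set.mem_iUnion]
  constructor
  · rintro ⟨φ, ⟨n, hn⟩, H⟩
    exact ⟨n, φ, hn, H⟩
  · rintro ⟨n, φ, hn, H⟩
    exact ⟨φ, ⟨n, hn⟩, H⟩
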